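/- Let G be a finite simple graph on vertex set V with a crown decomposition V = C ∪ H ∪ R, and let F be a field. Then minrank_F(G) = minrank_F(G[R]) + |C|, where G[R] denotes the subgraph of G induced by R. -/

import Mathlib

/-- `A` represents `G` over `F` if all diagonal entries of `A` are nonzero and `A i j = 0`
for all distinct non-adjacent vertices `i`, `j`. The minrank of `G` over `F` is the minimum
rank of a matrix representing `G` over `F`. -/
noncomputable def minrank (F : Type*) [Field F] {V : Type*} [Fintype V] [DecidableEq V]
    (G : SimpleGraph V) : ℕ :=
  sInf {r | ∃ A : Matrix V V F, (∀ i, A i i ≠ 0) ∧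
    (∀ i j, i ≠ j → ¬ G.Adj i j → A i j = 0) ∧ A.rank = r}

/-- A crown decomposition of `G`: a partition of the vertex set into a nonempty independent
set `C` (crown), a nonempty set `H` (head) separating `C` from `R` (royal body), together
with a matching of `H` into `C`. -/
def IsCrownDecomposition {V : Type*} [Fintype V] [DecidableEq V] (G : SimpleGraph V)
    (C H R : Finset V) : Prop :=
  C.Nonempty ∧ H.Nonempty ∧ C ∪ H ∪ R = Finset.univ ∧
  Disjoint C H ∧ Disjoint C R ∧ Disjoint H R ∧
  (∀ u ∈ C, ∀ v ∈ C, ¬ G.Adj u v) ∧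
  (∀ u ∈ C, ∀ v ∈ R, ¬ G.Adj u v) ∧
  ∃ f : H → C, Function.Injective f ∧ ∀ h : H, G.Adj ↑h ↑(f h)

/-!
Pulling a representing matrix back along a homomorphism of complement graphs `Gᶜ →g Kᶜ` repeats
and deletes rows and columns, so `minrank F G ≤ minrank F K`. Moreover minrank is additive on
disjoint sums and equals `|V|` on the edgeless graph. Since the edges at `C` all lead to `H`, the
inclusion of `C ∪ R` into `V` is such a homomorphism from the complement of `⊥ ⊕g G[R]` to `Gᶜ`.
Contracting every `h ∈ H` onto its partner in `C` is one in the opposite direction, because the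
fibres over `C` are cliques with at most two vertices.
-/

open Matrix SimpleGraph

section BlockDiagonalRank

lemma finrank_submodule_prod {R M N : Type*} [Ring R] [StrongRankCondition R] [AddCommGroup M]
    [AddCommGroup N] [Module R M] [Module R N] (S : Submodule R M) (T : Submodule R N)
    [Module.Free R S] [Module.Finite R S] [Module.Free R T] [Module.Finite R T] :
    Module.finrank R (S.prod T) = Module.finrank R S + Module.finrank R T := by
  have hinj : Function.Injective (S.subtype.prodMap T.subtype) :=
    S.injective_subtype.prodMap T.injective_subtype
  calc
    Module.finrank R (S.prod T) = Module.finrank R (S.subtype.prodMap T.subtype).range := by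
      rw [LinearMap.range_prodMap, S.range_subtype, T.range_subtype]
    _ = Module.finrank R (S × T) := LinearMap.finrank_range_of_inj hinj
    _ = Module.finrank R S + Module.finrank R T := Module.finrank_prod

variable {F m n p q : Type*} [Fintype n] [Fintype q]

lemma mulVecLin_fromBlocks_diag [CommSemiring F] (A : Matrix m n F) (B : Matrix p q F) :
    (fromBlocks A 0 0 B).mulVecLin =
      (LinearEquiv.sumArrowLequivProdArrow m p F F).symm.toLinearMap ∘ₗ
        A.mulVecLin.prodMap B.mulVecLin ∘ₗ
          (LinearEquiv.sumArrowLequivProdArrow n q F F).toLinearMap := by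
  refine LinearMap.ext fun v => ?_
  rw [mulVecLin_apply, fromBlocks_mulVec, zero_mulVec, zero_mulVec, add_zero, zero_add]
  ext (i | i) <;> rfl

lemma rank_fromBlocks_diag [Field F] (A : Matrix m n F) (B : Matrix p q F) :
    (fromBlocks A 0 0 B).rank = A.rank + B.rank := by
  rw [Matrix.rank, mulVecLin_fromBlocks_diag, LinearMap.range_comp, LinearEquiv.finrank_map_eq,
    LinearMap.range_comp_of_range_eq_top _ (LinearEquiv.range _), LinearMap.range_prodMap,
    finrank_submodule_prod, Matrix.rank, Matrix.rank]

end BlockDiagonalRank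

section Represents

variable {F V W : Type*}

/-- The matrix `A` represents the graph `G`: this is the condition over which `minrank` minimizes
the rank. -/
structure Represents [Zero F] (A : Matrix V V F) (G : SimpleGraph V) : Prop where
  diag_ne_zero (v : V) : A v v ≠ 0
  eq_zero_of_not_adj (u v : V) (hne : u ≠ v) (hadj : ¬ G.Adj u v) : A u v = 0

namespace Represents

lemma one [DecidableEq V] [MulZeroOneClass F] [Nontrivial F] (G : SimpleGraph V) :
    Represents (1 : Matrix V V F) G where
  diag_ne_zero := by simp
  eq_zero_of_not_adj _ _ hne _ := one_apply_ne hne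

variable [Zero F] {G : SimpleGraph V} {K : SimpleGraph W}

lemma submatrix {A : Matrix W W F} (hA : Represents A K) (φ : Gᶜ →g Kᶜ) :
    Represents (A.submatrix φ φ) G where
  diag_ne_zero v := hA.diag_ne_zero (φ v)
  eq_zero_of_not_adj u v hne hadj :=
    have hφ : Kᶜ.Adj (φ u) (φ v) := φ.map_adj ⟨hne, hadj⟩
    hA.eq_zero_of_not_adj _ _ hφ.1 hφ.2

lemma fromBlocks {A : Matrix V V F} {B : Matrix W W F} (hA : Represents A G)
    (hB : Represents B K) : Represents (Matrix.fromBlocks A 0 0 B) (G ⊕g K) where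
  diag_ne_zero := by
    rintro (v | w)
    · exact hA.diag_ne_zero v
    · exact hB.diag_ne_zero w
  eq_zero_of_not_adj := by
    rintro (u | u) (v | v) hne hadj
    · exact hA.eq_zero_of_not_adj u v (by simpa using hne) (by simpa using hadj)
    · rfl
    · rfl
    · exact hB.eq_zero_of_not_adj u v (by simpa using hne) (by simpa using hadj)

lemma toBlocks₁₁ {A : Matrix (V ⊕ W) (V ⊕ W) F} (hA : Represents A (G ⊕g K)) :
    Represents A.toBlocks₁₁ G where
  diag_ne_zero v := hA.diag_ne_zero (.inl v)
  eq_zero_of_not_adj u v hne hadj :=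
    hA.eq_zero_of_not_adj (.inl u) (.inl v) (by simpa using hne) (by simpa using hadj)

lemma toBlocks₂₂ {A : Matrix (V ⊕ W) (V ⊕ W) F} (hA : Represents A (G ⊕g K)) :
    Represents A.toBlocks₂₂ K where
  diag_ne_zero v := hA.diag_ne_zero (.inr v)
  eq_zero_of_not_adj u v hne hadj :=
    hA.eq_zero_of_not_adj (.inr u) (.inr v) (by simpa using hne) (by simpa using hadj)

lemma eq_fromBlocks {A : Matrix (V ⊕ W) (V ⊕ W) F} (hA : Represents A (G ⊕g K)) :
    A = Matrix.fromBlocks A.toBlocks₁₁ 0 0 A.toBlocks₂₂ := by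
  have h₁₂ : A.toBlocks₁₂ = 0 := by
    ext v w
    exact hA.eq_zero_of_not_adj (.inl v) (.inr w) (by simp) (by simp)
  have h₂₁ : A.toBlocks₂₁ = 0 := by
    ext w v
    exact hA.eq_zero_of_not_adj (.inr w) (.inl v) (by simp) (by simp)
  conv_lhs => rw [← fromBlocks_toBlocks A, h₁₂, h₂₁]

lemma eq_diagonal [DecidableEq V] {A : Matrix V V F} (hA : Represents A ⊥) :
    A = diagonal A.diag := by
  ext u v
  rcases eq_or_ne u v with rfl | hne
  · simp
  · rw [diagonal_apply_ne _ hne, hA.eq_zero_of_not_adj u v hne (by simp)]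

end Represents

end Represents

section Minrank

variable {F V W : Type*} [Field F] [Fintype V] [DecidableEq V] [Fintype W] [DecidableEq W]

lemma Represents.minrank_le {G : SimpleGraph V} {A : Matrix V V F} (hA : Represents A G) :
    minrank F G ≤ A.rank :=
  Nat.sInf_le ⟨A, hA.diag_ne_zero, hA.eq_zero_of_not_adj, rfl⟩

variable (F)

lemma exists_represents_rank_eq_minrank (G : SimpleGraph V) :
    ∃ A : Matrix V V F, Represents A G ∧ A.rank = minrank F G := by
  have hone : Represents (1 : Matrix V V F) G := .one G
  have hmem : minrank F G ∈ _ :=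
    Nat.sInf_mem ⟨_, 1, hone.diag_ne_zero, hone.eq_zero_of_not_adj, rfl⟩
  obtain ⟨A, hdiag, hzero, hrank⟩ := hmem
  exact ⟨A, ⟨hdiag, hzero⟩, hrank⟩

lemma minrank_le_of_compl_hom {G : SimpleGraph V} {K : SimpleGraph W} (φ : Gᶜ →g Kᶜ) :
    minrank F G ≤ minrank F K := by
  obtain ⟨A, hA, hrank⟩ := exists_represents_rank_eq_minrank F K
  calc
    minrank F G ≤ (A.submatrix φ φ).rank := (hA.submatrix φ).minrank_le
    _ ≤ A.rank := rank_submatrix_le A φ φ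
    _ = minrank F K := hrank

lemma minrank_sum (G : SimpleGraph V) (K : SimpleGraph W) :
    minrank F (G ⊕g K) = minrank F G + minrank F K := by
  apply le_antisymm
  · obtain ⟨A, hA, hrankA⟩ := exists_represents_rank_eq_minrank F G
    obtain ⟨B, hB, hrankB⟩ := exists_represents_rank_eq_minrank F K
    rw [← hrankA, ← hrankB, ← rank_fromBlocks_diag]
    exact (hA.fromBlocks hB).minrank_le
  · obtain ⟨A, hA, hrank⟩ := exists_represents_rank_eq_minrank F (G ⊕g K)
    rw [← hrank, hA.eq_fromBlocks, rank_fromBlocks_diag]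
    exact add_le_add hA.toBlocks₁₁.minrank_le hA.toBlocks₂₂.minrank_le

lemma minrank_bot : minrank F (⊥ : SimpleGraph V) = Fintype.card V := by
  obtain ⟨A, hA, hrank⟩ := exists_represents_rank_eq_minrank F (⊥ : SimpleGraph V)
  classical
  rw [← hrank, hA.eq_diagonal, rank_diagonal]
  exact Fintype.card_congr (Equiv.subtypeUnivEquiv hA.diag_ne_zero)

end Minrank

section InducedSubgraphs

variable (F : Type*) {V : Type*} [Field F] [Fintype V] [DecidableEq V] {G : SimpleGraph V}

lemma minrank_induce_add_minrank_induce_le {S T : Set V} [Fintype S] [Fintype T]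
    (hdisj : Disjoint S T) (hadj : ∀ u ∈ S, ∀ v ∈ T, ¬ G.Adj u v) :
    minrank F (G.induce S) + minrank F (G.induce T) ≤ minrank F G := by
  have hne {u v : V} (hu : u ∈ S) (hv : v ∈ T) : u ≠ v := hdisj.ne_of_mem hu hv
  let φ : (G.induce S ⊕g G.induce T)ᶜ →g Gᶜ :=
    { toFun := Sum.elim Subtype.val Subtype.val
      map_rel' := by
        rintro (u | u) (v | v) huv
        · simpa [Subtype.ext_iff] using huv
        · exact ⟨hne u.2 v.2, hadj u u.2 v v.2⟩
        · exact ⟨(hne v.2 u.2).symm, fun h => hadj v v.2 u u.2 h.symm⟩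
        · simpa [Subtype.ext_iff] using huv }
  rw [← minrank_sum]
  exact minrank_le_of_compl_hom F φ

lemma card_add_minrank_induce_le_of_isIndepSet {S T : Set V} [Fintype S] [Fintype T]
    (hS : G.IsIndepSet S) (hdisj : Disjoint S T)
    (hadj : ∀ u ∈ S, ∀ v ∈ T, ¬ G.Adj u v) :
    Fintype.card S + minrank F (G.induce T) ≤ minrank F G := by
  have hbot : G.induce S = ⊥ := by
    ext u v
    simpa only [comap_adj, Function.Embedding.subtype_apply, bot_adj, iff_false] using
      fun h => hS u.2 v.2 h.ne h
  rw [← minrank_bot F, ← hbot]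
  exact minrank_induce_add_minrank_induce_le F hdisj hadj

lemma minrank_le_card_add_minrank_induce_of_isClique_cover {ι : Type*} [Fintype ι] {T : Set V}
    [Fintype T] (K : ι → Set V) (hK : ∀ i, G.IsClique (K i)) (hcover : ∀ v ∉ T, ∃ i, v ∈ K i) :
    minrank F G ≤ Fintype.card ι + minrank F (G.induce T) := by
  classical
  choose κ hκ using hcover
  let φ : Gᶜ →g ((⊥ : SimpleGraph ι) ⊕g G.induce T)ᶜ :=
    { toFun v := if hv : v ∈ T then .inr ⟨v, hv⟩ else .inl (κ v hv)
      map_rel' {u v} huv := by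
        have hκ_ne (hu : u ∉ T) (hv : v ∉ T) : κ u hu ≠ κ v hv := fun h =>
          huv.2 (hK _ (hκ u hu) (h ▸ hκ v hv) huv.1)
        by_cases hu : u ∈ T <;> by_cases hv : v ∈ T <;> simp_all }
  rw [← minrank_bot F (V := ι), ← minrank_sum]
  exact minrank_le_of_compl_hom F φ

end InducedSubgraphs

lemma IsCrownDecomposition.exists_isClique_cover {V : Type*} [Fintype V] [DecidableEq V]
    {G : SimpleGraph V} {C H R : Finset V} (hcrown : IsCrownDecomposition G C H R) :
    ∃ K : C → Set V, (∀ c, G.IsClique (K c)) ∧ ∀ v ∉ (R : Set V), ∃ c, v ∈ K c := by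
  obtain ⟨-, -, huniv, -, -, -, -, -, f, hf, hadj⟩ := hcrown
  refine ⟨fun c => insert c.1 (Subtype.val '' (f ⁻¹' {c})), fun c => ?_, fun v hvR => ?_⟩
  · have hsub : (Subtype.val '' (f ⁻¹' {c})).Subsingleton :=
      (Set.subsingleton_singleton.preimage hf).image _
    rw [isClique_insert]
    refine ⟨hsub.pairwise _, ?_⟩
    rintro _ ⟨h, rfl, rfl⟩ -
    exact (hadj h).symm
  · have hv : v ∈ C ∪ H ∪ R := huniv ▸ Finset.mem_univ v
    simp only [Finset.mem_union] at hv
    obtain (hvC | hvH) | hvR' := hv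
    · exact ⟨⟨v, hvC⟩, Set.mem_insert _ _⟩
    · exact ⟨f ⟨v, hvH⟩, Set.mem_insert_of_mem _ ⟨⟨v, hvH⟩, rfl, rfl⟩⟩
    · exact absurd hvR' hvR

/-- For a crown decomposition `V = C ∪ H ∪ R` of `G`, the minrank of `G` over a field `F`
equals the minrank of `G[R]` over `F` plus `|C|`. -/
theorem minrank_crown {V : Type*} [Fintype V] [DecidableEq V] (G : SimpleGraph V)
    (C H R : Finset V) (hcrown : IsCrownDecomposition G C H R) (F : Type*) [Field F] :
    minrank F G = minrank F (G.induce (R : Set V)) + C.card := by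
  obtain ⟨K, hK, hcover⟩ := hcrown.exists_isClique_cover
  obtain ⟨-, -, -, -, hCR, -, hCC, hCR_adj, -⟩ := hcrown
  have hindep : G.IsIndepSet C := fun u hu v hv _ => hCC u hu v hv
  rw [← Fintype.card_coe C, add_comm]
  apply le_antisymm
  · exact minrank_le_card_add_minrank_induce_of_isClique_cover F K hK hcover
  · exact card_add_minrank_induce_le_of_isIndepSet F hindep (Finset.disjoint_coe.mpr hCR) hCR_adj
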